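/- Let R be a Hecke symmetry with parameter q such that j_q ≠ 0 for 2 ≤ j ≤ k, and let D be an N×N matrix with entries in a unital associative ℂ-algebra 𝒜 satisfying R⁻¹ D₁ R⁻¹ D₁ = D₁ R⁻¹ D₁ R⁻¹. Then the R-skew-symmetrizer commutes with the reversed chain of copies of D: A^(k) D_{k̄} D_{k̄−1} ⋯ D_{1̄} = D_{k̄} D_{k̄−1} ⋯ D_{1̄} A^(k), as N^k×N^k matrices over 𝒜. -/

import Mathlib

open Matrix BigOperators

noncomputable section

/-- An `N² × N²` complex matrix, viewed as an operator on `ℂ^N ⊗ ℂ^N`. -/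
abbrev RMat (N : ℕ) := Matrix (Fin N × Fin N) (Fin N × Fin N) ℂ

/-- A matrix on the `k`-th tensor power of `ℂ^N`, with entries in `A`. -/
abbrev TMat (N k : ℕ) (A : Type _) := Matrix (Fin k → Fin N) (Fin k → Fin N) A

/-- The `q`-number `j_q = (q^j - q^{-j})/(q - q^{-1})`. -/
def qNum (q : ℂ) (j : ℕ) : ℂ := (q ^ j - q⁻¹ ^ j) / (q - q⁻¹)

/-- Embedding of an `N²×N²` matrix `R` into the `k`-th tensor power,
acting in the (0-based) tensor factors `i` and `i+1`.  The paper's `R_i`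
(1-based) is `embR k R (i-1)`. -/
def embR {N : ℕ} (k : ℕ) (R : RMat N) (i : ℕ) : TMat N k ℂ := fun f g =>
  if h : i + 1 < k then
    if ∀ j : Fin k, j.val ≠ i → j.val ≠ i + 1 → f j = g j then
      R (f ⟨i, Nat.lt_of_succ_lt h⟩, f ⟨i + 1, h⟩) (g ⟨i, Nat.lt_of_succ_lt h⟩, g ⟨i + 1, h⟩)
    else 0
  else (1 : TMat N k ℂ) f g

/-- `X ⊗ I^{⊗(k-1)}` : the first copy `X_{1̄}` of an `N×N` matrix over `A`. -/
def emb1 {N : ℕ} (k : ℕ) {A : Type _} [Ring A] (X : Matrix (Fin N) (Fin N) A) :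
    TMat N k A := fun f g =>
  if h : 0 < k then
    if ∀ j : Fin k, j.val ≠ 0 → f j = g j then X (f ⟨0, h⟩) (g ⟨0, h⟩) else 0
  else (1 : TMat N k A) f g

/-- Lift a complex matrix to a matrix over the `ℂ`-algebra `A`. -/
def liftC {N k : ℕ} (A : Type _) [Ring A] [Algebra ℂ A] (X : TMat N k ℂ) : TMat N k A :=
  X.map (algebraMap ℂ A)

/-- The copies `X_{1̄}, X_{2̄}, …` of `X` in the `k`-th tensor power:
`copyX k R Rinv X i` is the paper's `X_{\overline{i+1}}`, i.e.
`X_{1̄} = X ⊗ I^{⊗(k-1)}` and `X_{\overline{i+1}} = R_i X_{ī} R_i⁻¹`. -/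
def copyX {N : ℕ} (k : ℕ) (R Rinv : RMat N) {A : Type _} [Ring A] [Algebra ℂ A]
    (X : Matrix (Fin N) (Fin N) A) : ℕ → TMat N k A
  | 0 => emb1 k X
  | i + 1 => liftC A (embR k R i) * copyX k R Rinv X i * liftC A (embR k Rinv i)

/-- The `R`-skew-symmetrizers, on the ambient `k`-th tensor power:
`Asym k R q j` is `A^{(j)}` (acting in the first `j` factors). -/
def Asym {N : ℕ} (k : ℕ) (R : RMat N) (q : ℂ) : ℕ → TMat N k ℂ
  | 0 => 1
  | 1 => 1
  | j + 2 =>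
      (qNum q (j + 2))⁻¹ •
        (Asym k R q (j + 1) *
          ((q ^ (j + 1)) • (1 : TMat N k ℂ) - (qNum q (j + 1)) • embR k R j) *
          Asym k R q (j + 1))

/-- The `R`-symmetrizers, on the ambient `k`-th tensor power:
`Ssym k R q j` is `S^{(j)}` (acting in the first `j` factors). -/
def Ssym {N : ℕ} (k : ℕ) (R : RMat N) (q : ℂ) : ℕ → TMat N k ℂ
  | 0 => 1
  | 1 => 1
  | j + 2 =>
      (qNum q (j + 2))⁻¹ •
        (Ssym k R q (j + 1) *
          ((q⁻¹ ^ (j + 1)) • (1 : TMat N k ℂ) + (qNum q (j + 1)) • embR k R j) *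
          Ssym k R q (j + 1))

/-- The braid relation `R₁₂ R₂₃ R₁₂ = R₂₃ R₁₂ R₂₃` on `(ℂ^N)^{⊗3}`. -/
def IsBraiding {N : ℕ} (R : RMat N) : Prop :=
  embR 3 R 0 * embR 3 R 1 * embR 3 R 0 = embR 3 R 1 * embR 3 R 0 * embR 3 R 1

/-- The Hecke condition `(q·I − R)(q⁻¹·I + R) = 0`. -/
def HeckeCond {N : ℕ} (R : RMat N) (q : ℂ) : Prop :=
  (q • (1 : RMat N) - R) * (q⁻¹ • (1 : RMat N) + R) = 0

/-- The Reflection Equation `R M₁ R M₁ = M₁ R M₁ R` (on `(ℂ^N)^{⊗2}`,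
with entries in `A`). -/
def RERel {N : ℕ} (R : RMat N) {A : Type _} [Ring A] [Algebra ℂ A]
    (M : Matrix (Fin N) (Fin N) A) : Prop :=
  liftC A (embR 2 R 0) * emb1 2 M * liftC A (embR 2 R 0) * emb1 2 M
    = emb1 2 M * liftC A (embR 2 R 0) * emb1 2 M * liftC A (embR 2 R 0)

/-- The relation `R⁻¹ D₁ R⁻¹ D₁ = D₁ R⁻¹ D₁ R⁻¹` on the matrix `D`,
where `Rinv = R⁻¹`. -/
def DDRel {N : ℕ} (Rinv : RMat N) {A : Type _} [Ring A] [Algebra ℂ A]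
    (D : Matrix (Fin N) (Fin N) A) : Prop :=
  liftC A (embR 2 Rinv 0) * emb1 2 D * liftC A (embR 2 Rinv 0) * emb1 2 D
    = emb1 2 D * liftC A (embR 2 Rinv 0) * emb1 2 D * liftC A (embR 2 Rinv 0)

/-- The permutation relations `D₁ R M₁ = R M₁ R⁻¹ D₁ R⁻¹ + I`, where `Rinv = R⁻¹`. -/
def PermRel {N : ℕ} (R Rinv : RMat N) {A : Type _} [Ring A] [Algebra ℂ A]
    (M D : Matrix (Fin N) (Fin N) A) : Prop :=
  emb1 2 D * liftC A (embR 2 R 0) * emb1 2 M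
    = liftC A (embR 2 R 0) * emb1 2 M * liftC A (embR 2 Rinv 0) * emb1 2 D *
        liftC A (embR 2 Rinv 0) + 1

/-- `Ψ` is the skew-inverse of `R`:  `Σ_{j,b} R^{ij}_{ab} Ψ^{bc}_{jd} = δ^i_d δ^c_a`. -/
def SkewInv {N : ℕ} (R Ψ : RMat N) : Prop :=
  ∀ i a c d : Fin N,
    (∑ j : Fin N, ∑ b : Fin N, R (i, j) (a, b) * Ψ (b, c) (j, d))
      = if i = d ∧ c = a then 1 else 0

/-- The matrix `C`, `C^c_d = Σ_i Ψ^{ic}_{id}`. -/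
def Cmat {N : ℕ} (Ψ : RMat N) : Matrix (Fin N) (Fin N) ℂ :=
  fun c d => ∑ i : Fin N, Ψ (i, c) (i, d)

/-- The `R`-trace over all `k` tensor factors: `⟨X⟩_{1…k} = Tr(C^{⊗k} X)`. -/
def rTr {N k : ℕ} {A : Type _} [Ring A] [Algebra ℂ A] (C : Matrix (Fin N) (Fin N) ℂ)
    (X : TMat N k A) : A :=
  ∑ f : Fin k → Fin N, ∑ g : Fin k → Fin N, (∏ j : Fin k, C (f j) (g j)) • X g f

/-- The chain `X_{1̄} X_{2̄} ⋯ X_{n̄}`. -/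
def upChain {N : ℕ} (k : ℕ) (R Rinv : RMat N) {A : Type _} [Ring A] [Algebra ℂ A]
    (X : Matrix (Fin N) (Fin N) A) (n : ℕ) : TMat N k A :=
  ((List.range n).map (copyX k R Rinv X)).prod

/-- The reversed chain `X_{n̄} X_{\overline{n-1}} ⋯ X_{1̄}`. -/
def downChain {N : ℕ} (k : ℕ) (R Rinv : RMat N) {A : Type _} [Ring A] [Algebra ℂ A]
    (X : Matrix (Fin N) (Fin N) A) (n : ℕ) : TMat N k A :=
  ((List.range n).reverse.map (copyX k R Rinv X)).prod

/-- The Capelli chain `L_{1̄}(L_{2̄} + q·1_q I)(L_{3̄} + q²·2_q I) ⋯ (L_{n̄} + q^{n-1}·(n-1)_q I)`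
(note `0_q = 0`). -/
def capChainA {N : ℕ} (k : ℕ) (R Rinv : RMat N) (q : ℂ) {A : Type _} [Ring A] [Algebra ℂ A]
    (L : Matrix (Fin N) (Fin N) A) (n : ℕ) : TMat N k A :=
  ((List.range n).map
    (fun i => copyX k R Rinv L i + ((q ^ i) * qNum q i) • (1 : TMat N k A))).prod

/-- The symmetric Capelli chain
`L_{1̄}(L_{2̄} - q⁻¹·1_q I) ⋯ (L_{n̄} - q^{-(n-1)}·(n-1)_q I)`. -/
def capChainS {N : ℕ} (k : ℕ) (R Rinv : RMat N) (q : ℂ) {A : Type _} [Ring A] [Algebra ℂ A]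
    (L : Matrix (Fin N) (Fin N) A) (n : ℕ) : TMat N k A :=
  ((List.range n).map
    (fun i => copyX k R Rinv L i - ((q⁻¹ ^ i) * qNum q i) • (1 : TMat N k A))).prod

/-- The descending chain `R_{a→b} = R_a R_{a-1} ⋯ R_b` (1-based indices;
identity when `b > a`). -/
def rChainDesc {N : ℕ} (k : ℕ) (R : RMat N) (a b : ℕ) : TMat N k ℂ :=
  ((List.range' b (a + 1 - b)).reverse.map (fun j => embR k R (j - 1))).prod

/-- The ascending chain `R_{b→a} = R_b R_{b+1} ⋯ R_a` (1-based indices;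
identity when `b > a`). -/
def rChainAsc {N : ℕ} (k : ℕ) (R : RMat N) (b a : ℕ) : TMat N k ℂ :=
  ((List.range' b (a + 1 - b)).map (fun j => embR k R (j - 1))).prod

/-!
Write `r i` for the operators `R_{i+1}` and `d i` for the copies `D_{\overline{i+1}}`. The braid
relations alone make `r i` commute with `d j` unless `j ∈ {i, i + 1}`. The relation on `D` says
that `r 0` commutes with `d 1 * d 0 = r 0 * d 0 * (r 0)⁻¹ * d 0`, and conjugation by
`r i * r (i + 1)` carries this to every pair `d (i + 1) * d i`. Hence each `r i` commutes with the
reversed chain, and so does every element of the algebra that the `r i` generate, such as `A^(k)`.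
-/

section Conjugation

variable {M : Type*} [Monoid M]

theorem commute_of_semiconjBy_units {u : Mˣ} {a b x y : M} (hab : SemiconjBy (u : M) a b)
    (hxy : SemiconjBy (u : M) x y) (h : Commute a x) : Commute b y := by
  refine u.mul_left_inj.mp ?_
  rw [← (hab.mul_right hxy).eq, ← (hxy.mul_right hab).eq, h.eq]

/-- Elements `d 0, …, d (k - 1)` of a monoid, each obtained from its predecessor by conjugation
with the generators `r 0, …, r (k - 2)` of a representation of the braid group on `k` strands:
an abstract form of the copies `X_{1̄}, …, X_{k̄}` of a matrix, in which the reflection-type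
relation on `X` appears as the commutation of `r 0` with `d 1 * d 0`. -/
structure BraidedCopies (k : ℕ) (r : ℕ → Mˣ) (d : ℕ → M) : Prop where
  semiconjBy : ∀ i, SemiconjBy (r i : M) (d i) (d (i + 1))
  commute_generators : ∀ i j, i + 2 ≤ j → j + 1 < k → Commute (r i : M) (r j)
  braid : ∀ i, i + 2 < k → (r i * r (i + 1) * r i : M) = r (i + 1) * r i * r (i + 1)
  commute_zero : ∀ j, 1 ≤ j → j + 1 < k → Commute (r j : M) (d 0)
  commute_pair_zero : 1 < k → Commute (r 0 : M) (d 1 * d 0)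

namespace BraidedCopies

variable {k : ℕ} {r : ℕ → Mˣ} {d : ℕ → M}

theorem succ_eq_conj (H : BraidedCopies k r d) (i : ℕ) :
    d (i + 1) = r i * d i * (r i)⁻¹ := by
  rw [(H.semiconjBy i).eq, Units.mul_inv_cancel_right]

theorem commute_of_lt (H : BraidedCopies k r d) {i j : ℕ} (hij : i < j) (hj : j + 1 < k) :
    Commute (r j : M) (d i) := by
  induction i with
  | zero => exact H.commute_zero j hij hj
  | succ i ih =>
    have hr : Commute (r j : M) (r i) := (H.commute_generators i j hij hj).symm
    rw [H.succ_eq_conj]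
    exact (hr.mul_right (ih (by lia))).mul_right hr.units_inv_right

/-- Conjugation by `r (i + 1) * r i` carries the pair `r (i + 1)`, `d i` to `r i`, `d (i + 2)`. -/
theorem commute_of_add_two_le (H : BraidedCopies k r d) {i j : ℕ} (hij : i + 2 ≤ j) (hj : j < k) :
    Commute (r i : M) (d j) := by
  induction j, hij using Nat.le_induction with
  | base =>
    have hr : SemiconjBy ((r (i + 1) * r i : Mˣ) : M) (r (i + 1)) (r i) := by
      rw [SemiconjBy, Units.val_mul, ← H.braid i hj, mul_assoc]
    have hd : SemiconjBy ((r (i + 1) * r i : Mˣ) : M) (d i) (d (i + 2)) :=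
      (H.semiconjBy (i + 1)).mul_left (H.semiconjBy i)
    exact commute_of_semiconjBy_units hr hd (H.commute_of_lt i.lt_succ_self hj)
  | succ j hij ih =>
    have hr : Commute (r i : M) (r j) := H.commute_generators i j hij hj
    rw [H.succ_eq_conj]
    exact (hr.mul_right (ih (by lia))).mul_right hr.units_inv_right

/-- Conjugation by `r i * r (i + 1)` carries `r i`, `d i`, `d (i + 1)` to `r (i + 1)`, `d (i + 1)`,
`d (i + 2)`, which propagates the case `i = 0`. -/
theorem commute_pair (H : BraidedCopies k r d) {i : ℕ} (hi : i + 1 < k) :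
    Commute (r i : M) (d (i + 1) * d i) := by
  induction i with
  | zero => exact H.commute_pair_zero hi
  | succ i ih =>
    have hr : SemiconjBy ((r i * r (i + 1) : Mˣ) : M) (r i) (r (i + 1)) := by
      rw [SemiconjBy, Units.val_mul, H.braid i hi, mul_assoc]
    have hd : SemiconjBy ((r i * r (i + 1) : Mˣ) : M) (d i) (d (i + 1)) :=
      (H.semiconjBy i).mul_left (H.commute_of_lt i.lt_succ_self hi)
    have hd' : SemiconjBy ((r i * r (i + 1) : Mˣ) : M) (d (i + 1)) (d (i + 2)) :=
      SemiconjBy.mul_left (H.commute_of_add_two_le le_rfl hi) (H.semiconjBy (i + 1))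
    exact commute_of_semiconjBy_units hr (hd'.mul_right hd) (ih (by lia))

theorem commute_prod_reverse_range (H : BraidedCopies k r d) {i n : ℕ} (hi : i + 2 ≤ n)
    (hn : n ≤ k) : Commute (r i : M) ((List.range n).reverse.map d).prod := by
  induction n, hi using Nat.le_induction with
  | base =>
    have hlow : Commute (r i : M) ((List.range i).reverse.map d).prod := by
      refine Commute.list_prod_right _ _ fun x hx => ?_
      obtain ⟨j, hj, rfl⟩ := List.mem_map.mp hx
      exact H.commute_of_lt (by simpa using hj) hn
    simpa [List.range_succ, mul_assoc] using (H.commute_pair hn).mul_right hlow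
  | succ n hi ih =>
    simpa [List.range_succ] using (H.commute_of_add_two_le hi hn).mul_right (ih (by lia))

end BraidedCopies

end Conjugation

section OnSlots

theorem forall_iff_forall_notMem_range {ι κ : Type*} (e : ι → κ) {p : κ → Prop} :
    (∀ j, p j) ↔ (∀ j ∉ Set.range e, p j) ∧ ∀ i, p (e i) := by
  refine ⟨fun h => ⟨fun j _ => h j, fun i => h (e i)⟩, fun ⟨hout, hin⟩ j => ?_⟩
  by_cases hj : j ∈ Set.range e
  · obtain ⟨i, rfl⟩ := hj
    exact hin i
  · exact hout j hj

theorem eq_iff_comp_eq_and_eqOn_compl_range {ι κ α : Type*} (e : ι → κ) {f g : κ → α} :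
    f = g ↔ f ∘ e = g ∘ e ∧ Set.EqOn f g (Set.range e)ᶜ := by
  rw [← Set.eqOn_range, ← Set.eqOn_union, Set.union_compl_self, Set.eqOn_univ]

variable {n ι κ B C : Type*} [Fintype n] [DecidableEq n] [Fintype ι] [DecidableEq ι]
  [Fintype κ] [DecidableEq κ] [Semiring B] [Semiring C]

open Classical in
/-- The operator on the tensor power indexed by `κ` which acts as `X` in the tensor factors
`e i`, `i : ι`, matched with those of `X` along `e`, and as the identity in all other factors. -/
def onSlots (e : ι ↪ κ) : Matrix (ι → n) (ι → n) B →+* Matrix (κ → n) (κ → n) B where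
  toFun X := of fun f g => if Set.EqOn f g (Set.range e)ᶜ then X (f ∘ e) (g ∘ e) else 0
  map_one' := by
    ext f g
    simp only [of_apply, one_apply, eq_iff_comp_eq_and_eqOn_compl_range e (f := f),
      and_comm (a := f ∘ e = g ∘ e), ite_and]
  map_mul' X Y := by
    ext f g
    simp only [of_apply, mul_apply, ite_zero_mul_ite_zero]
    split_ifs with hfg
    · refine Fintype.sum_of_injective (fun u => Function.extend e u f)
        (Function.extend_injective e.injective f) _ _ (fun h hh => if_neg ?_) fun u => ?_
      · refine fun ⟨hf, _⟩ => hh ⟨h ∘ e, (eq_iff_comp_eq_and_eqOn_compl_range e).mpr ⟨?_, ?_⟩⟩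
        · exact Function.extend_comp e.injective _ _
        · exact fun j hj => (Function.extend_apply' _ _ _ hj).trans (hf hj)
      · have hin : Function.extend e u f ∘ e = u := Function.extend_comp e.injective _ _
        have hout : Set.EqOn (Function.extend e u f) f (Set.range e)ᶜ :=
          fun j hj => Function.extend_apply' _ _ _ hj
        simp only [hin]
        exact (if_pos ⟨hout.symm, hout.trans hfg⟩).symm
    · exact (Finset.sum_eq_zero fun h _ => if_neg fun hh => hfg (hh.1.trans hh.2)).symm
  map_zero' := by ext; simp
  map_add' X Y := by ext; simp [ite_add_ite]

open Classical in
theorem onSlots_apply (e : ι ↪ κ) (X : Matrix (ι → n) (ι → n) B) (f g : κ → n) :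
    onSlots e X f g = if Set.EqOn f g (Set.range e)ᶜ then X (f ∘ e) (g ∘ e) else 0 :=
  rfl

theorem onSlots_map (e : ι ↪ κ) (φ : B →+* C) (X : Matrix (ι → n) (ι → n) B) :
    (onSlots e X).map φ = onSlots e (X.map φ) := by
  ext f g
  simp only [map_apply, onSlots_apply, apply_ite φ, map_zero]

open Classical in
theorem onSlots_mul_onSlots_apply {ι' : Type*} [Fintype ι'] [DecidableEq ι'] {e : ι ↪ κ}
    {e' : ι' ↪ κ} (he : Disjoint (Set.range e) (Set.range e')) (X : Matrix (ι → n) (ι → n) B)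
    (Y : Matrix (ι' → n) (ι' → n) B) (f g : κ → n) :
    (onSlots e X * onSlots e' Y) f g =
      if Set.EqOn f g (Set.range e ∪ Set.range e')ᶜ then
        X (f ∘ e) (g ∘ e) * Y (f ∘ e') (g ∘ e') else 0 := by
  simp only [mul_apply, onSlots_apply, ite_zero_mul_ite_zero]
  let m : κ → n := (Set.range e).piecewise g f
  have hm_in : Set.EqOn m g (Set.range e) := Set.piecewise_eqOn _ _ _
  have hm_out : Set.EqOn m f (Set.range e)ᶜ := Set.piecewise_eqOn_compl _ _ _
  have hm_comp : m ∘ e = g ∘ e := Set.eqOn_range.mp hm_in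
  have hm_comp' : m ∘ e' = f ∘ e' := Set.eqOn_range.mp (hm_out.mono he.subset_compl_left)
  rw [Finset.sum_eq_single m]
  · rw [hm_comp, hm_comp', Set.compl_union]
    refine if_congr ⟨fun h => ?_, fun h => ⟨hm_out.symm, fun j hj' => ?_⟩⟩ rfl rfl
    · exact (h.1.mono Set.inter_subset_left).trans (h.2.mono Set.inter_subset_right)
    · by_cases hj : j ∈ Set.range e
      · exact hm_in hj
      · exact (hm_out hj).trans (h ⟨hj, hj'⟩)
  · refine fun h _ hne => if_neg fun ⟨hf, hg⟩ => hne ?_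
    refine (eq_iff_comp_eq_and_eqOn_compl_range e).mpr ⟨?_, hf.symm.trans hm_out.symm⟩
    exact (Set.eqOn_range.mp (hg.mono he.subset_compl_right)).trans hm_comp.symm
  · exact fun h => absurd (Finset.mem_univ m) h

theorem commute_onSlots_of_disjoint {ι' : Type*} [Fintype ι'] [DecidableEq ι'] {e : ι ↪ κ}
    {e' : ι' ↪ κ} (he : Disjoint (Set.range e) (Set.range e')) {X : Matrix (ι → n) (ι → n) B}
    {Y : Matrix (ι' → n) (ι' → n) B} (hXY : ∀ a b c d, Commute (X a b) (Y c d)) :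
    Commute (onSlots e X) (onSlots e' Y) := by
  classical
  ext f g
  rw [onSlots_mul_onSlots_apply he, onSlots_mul_onSlots_apply he.symm, (hXY _ _ _ _).eq,
    Set.union_comm]

end OnSlots

section TensorPowers

variable {N k m i : ℕ}

/-- The inclusion of `m` consecutive tensor factors, starting at the (0-based) position `i`,
into the `k` factors of a tensor power. -/
def window (h : i + m ≤ k) : Fin m ↪ Fin k := (Fin.natAddEmb i).trans (Fin.castLEEmb h)

theorem val_window (h : i + m ≤ k) (a : Fin m) : (window h a : ℕ) = i + a := rfl

theorem mem_range_window (h : i + m ≤ k) (j : Fin k) :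
    j ∈ Set.range (window h) ↔ i ≤ j ∧ (j : ℕ) < i + m := by
  refine ⟨?_, fun hj => ⟨⟨j - i, by lia⟩, Fin.ext ?_⟩⟩
  · rintro ⟨a, rfl⟩
    rw [val_window]
    lia
  · rw [val_window]
    lia

theorem disjoint_range_window {m' i' : ℕ} (h : i + m ≤ k) (h' : i' + m' ≤ k) (hi : i + m ≤ i') :
    Disjoint (Set.range (window h)) (Set.range (window h')) :=
  Set.disjoint_left.mpr fun j hj hj' => by
    rw [mem_range_window] at hj hj'
    lia

theorem onSlots_window_embR (h : i + m ≤ k) {t : ℕ} (ht : t + 1 < m) (R : RMat N) :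
    onSlots (window h) (embR m R t) = embR k R (i + t) := by
  classical
  ext f g
  have hk : i + t + 1 < k := by lia
  simp only [onSlots_apply, embR, dif_pos ht, dif_pos hk]
  rw [← ite_and]
  refine if_congr ?_ rfl rfl
  rw [forall_iff_forall_notMem_range (window h)]
  refine and_congr (forall₂_congr fun j hj => ?_) (forall_congr' fun a => ?_)
  · rw [Set.mem_compl_iff, mem_range_window] at hj
    exact ⟨fun hfg _ _ => hfg, fun hfg => hfg (by lia) (by lia)⟩
  · simp only [Function.comp_apply, val_window, Nat.add_assoc, ne_eq, Nat.add_left_cancel_iff]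

theorem onSlots_window_emb1 {B : Type*} [Ring B] (h : 0 + m ≤ k) (hm : 0 < m)
    (X : Matrix (Fin N) (Fin N) B) : onSlots (window h) (emb1 m X) = emb1 k X := by
  classical
  ext f g
  have hk : 0 < k := by lia
  simp only [onSlots_apply, emb1, dif_pos hm, dif_pos hk]
  rw [← ite_and]
  refine if_congr ?_ rfl rfl
  rw [forall_iff_forall_notMem_range (window h)]
  refine and_congr (forall₂_congr fun j hj => ?_) (forall_congr' fun a => ?_)
  · rw [Set.mem_compl_iff, mem_range_window] at hj
    exact ⟨fun hfg _ => hfg, fun hfg => hfg (by lia)⟩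
  · simp only [Function.comp_apply, val_window, zero_add]

theorem embR_eq_one_of_le (h : k ≤ i + 1) (R : RMat N) : embR k R i = 1 := by
  ext f g
  simp only [embR, dif_neg h.not_gt]

theorem embR_two_zero (R : RMat N) :
    embR 2 R 0 = reindexAlgEquiv ℂ ℂ (finTwoArrowEquiv (Fin N)).symm R := by
  ext f g
  have hfg : ∀ j : Fin 2, j.val ≠ 0 → j.val ≠ 0 + 1 → f j = g j := fun j h0 h1 => by lia
  exact (dif_pos (by decide)).trans (if_pos hfg)

theorem embR_eq_onSlots (h : i + 2 ≤ k) (R : RMat N) :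
    embR k R i = onSlots (window h) (embR 2 R 0) :=
  (onSlots_window_embR h one_lt_two R).symm

theorem embR_mul_embR_of_mul_eq_one {R Rinv : RMat N} (hinv : R * Rinv = 1) (k i : ℕ) :
    embR k R i * embR k Rinv i = 1 := by
  rcases le_or_gt k (i + 1) with h | h
  · rw [embR_eq_one_of_le h, embR_eq_one_of_le h, mul_one]
  · rw [embR_eq_onSlots h, embR_eq_onSlots h, ← map_mul, embR_two_zero, embR_two_zero, ← map_mul,
      hinv, map_one, map_one]

theorem commute_embR_embR (R R' : RMat N) {j : ℕ} (hij : i + 2 ≤ j) (hj : j + 2 ≤ k) :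
    Commute (embR k R i) (embR k R' j) := by
  rw [embR_eq_onSlots (by lia : i + 2 ≤ k), embR_eq_onSlots hj]
  exact commute_onSlots_of_disjoint (disjoint_range_window _ _ hij) fun _ _ _ _ => Commute.all _ _

theorem IsBraiding.embR_braid {R : RMat N} (hR : IsBraiding R) (hi : i + 3 ≤ k) :
    embR k R i * embR k R (i + 1) * embR k R i =
      embR k R (i + 1) * embR k R i * embR k R (i + 1) := by
  have h := congrArg (onSlots (window hi)) hR
  simpa only [map_mul, add_zero, onSlots_window_embR hi (by decide : 0 + 1 < 3),
    onSlots_window_embR hi (by decide : 1 + 1 < 3)] using h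

theorem asym_mem_adjoin (R : RMat N) (q : ℂ) :
    ∀ j, Asym k R q j ∈ Algebra.adjoin ℂ (Set.range (embR k R))
  | 0 => one_mem _
  | 1 => one_mem _
  | j + 2 => by
    have ih := asym_mem_adjoin R q (j + 1)
    have hR : embR k R j ∈ Algebra.adjoin ℂ (Set.range (embR k R)) :=
      Algebra.subset_adjoin ⟨j, rfl⟩
    have hmid : q ^ (j + 1) • (1 : TMat N k ℂ) - qNum q (j + 1) • embR k R j ∈
        Algebra.adjoin ℂ (Set.range (embR k R)) :=
      sub_mem (Subalgebra.smul_mem _ (one_mem _) _) (Subalgebra.smul_mem _ hR _)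
    exact Subalgebra.smul_mem _ (mul_mem (mul_mem ih hmid) ih) _

section Copies

variable {A : Type*} [Ring A] [Algebra ℂ A]

theorem liftC_eq_mapMatrix (X : TMat N k ℂ) : liftC A X = (Algebra.ofId ℂ A).mapMatrix X := rfl

theorem onSlots_liftC (e : Fin m ↪ Fin k) (X : TMat N m ℂ) :
    onSlots e (liftC A X) = liftC A (onSlots e X) :=
  (onSlots_map e (algebraMap ℂ A) X).symm

theorem commute_liftC_embR_emb1 (R : RMat N) (X : Matrix (Fin N) (Fin N) A) (hi : 1 ≤ i)
    (hk : i + 2 ≤ k) : Commute (liftC A (embR k R i)) (emb1 k X) := by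
  rw [embR_eq_onSlots hk, ← onSlots_liftC,
    ← onSlots_window_emb1 (by lia : 0 + 1 ≤ k) one_pos]
  exact commute_onSlots_of_disjoint (disjoint_range_window _ _ hi).symm
    fun _ _ _ _ => Algebra.commute_algebraMap_left _ _

theorem DDRel.commute_liftC_embR {Rinv : RMat N} {D : Matrix (Fin N) (Fin N) A} (h : DDRel Rinv D)
    (hk : 2 ≤ k) : Commute (liftC A (embR k Rinv 0))
      (emb1 k D * liftC A (embR k Rinv 0) * emb1 k D) := by
  have hk' : 0 + 2 ≤ k := by lia
  have h' := congrArg (onSlots (window hk')) h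
  simpa only [map_mul, onSlots_liftC, onSlots_window_embR hk' one_lt_two,
    onSlots_window_emb1 hk' two_pos, Commute, SemiconjBy, mul_assoc] using h'

/-- The operator `R_{i+1}` over `A`, as a unit with inverse `(R⁻¹)_{i+1}`. -/
def embRUnit (k : ℕ) (A : Type*) [Ring A] [Algebra ℂ A] {R Rinv : RMat N} (hinv : R * Rinv = 1)
    (i : ℕ) : (TMat N k A)ˣ :=
  Units.map (Algebra.ofId ℂ A).mapMatrix.toMonoidHom
    ⟨embR k R i, embR k Rinv i, embR_mul_embR_of_mul_eq_one hinv k i,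
      embR_mul_embR_of_mul_eq_one (mul_eq_one_comm.mp hinv) k i⟩

theorem braidedCopies_copyX {R Rinv : RMat N} (hinv : R * Rinv = 1) (hR : IsBraiding R)
    {D : Matrix (Fin N) (Fin N) A} (hD : DDRel Rinv D) :
    BraidedCopies k (embRUnit k A hinv) (copyX k R Rinv D) where
  semiconjBy i := ((embRUnit k A hinv i).inv_mul_cancel_right _).symm
  commute_generators i j hij hj :=
    (commute_embR_embR R R hij hj).map (Algebra.ofId ℂ A).mapMatrix
  braid i hi := by
    have h := congrArg (Algebra.ofId ℂ A).mapMatrix (hR.embR_braid hi)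
    simp only [map_mul] at h
    exact h
  commute_zero j hj hk := commute_liftC_embR_emb1 R D hj hk
  commute_pair_zero hk := by
    have h : Commute (embRUnit k A hinv 0 : TMat N k A)
        (emb1 k D * (embRUnit k A hinv 0)⁻¹ * emb1 k D) :=
      Commute.units_inv_left_iff.mp (hD.commute_liftC_embR hk)
    have hpair : copyX k R Rinv D 1 * copyX k R Rinv D 0 = embRUnit k A hinv 0 *
        (emb1 k D * (embRUnit k A hinv 0)⁻¹ * emb1 k D) := by
      simp only [← mul_assoc]
      rfl
    rw [hpair]
    exact (Commute.refl _).mul_right h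

theorem commute_liftC_embR_downChain {R Rinv : RMat N} (hinv : R * Rinv = 1) (hR : IsBraiding R)
    {D : Matrix (Fin N) (Fin N) A} (hD : DDRel Rinv D) (i : ℕ) :
    Commute (liftC A (embR k R i)) (downChain k R Rinv D k) := by
  rcases le_or_gt k (i + 1) with h | h
  · rw [embR_eq_one_of_le h, liftC_eq_mapMatrix, map_one]
    exact Commute.one_left _
  · exact (braidedCopies_copyX hinv hR hD).commute_prod_reverse_range h le_rfl

theorem statement13_general {R Rinv : RMat N} (hinv : R * Rinv = 1) (hR : IsBraiding R)
    {D : Matrix (Fin N) (Fin N) A} (hD : DDRel Rinv D) {Y : TMat N k ℂ}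
    (hY : Y ∈ Algebra.adjoin ℂ (Set.range (embR k R))) :
    Commute (liftC A Y) (downChain k R Rinv D k) := by
  have hlift : liftC A Y ∈ Algebra.adjoin ℂ (Set.range fun i => liftC A (embR k R i)) := by
    have h := Subalgebra.mem_map.mpr ⟨Y, hY, (liftC_eq_mapMatrix (A := A) Y).symm⟩
    rwa [AlgHom.map_adjoin, ← Set.range_comp] at h
  refine (Algebra.commute_of_mem_adjoin_of_forall_mem_commute hlift ?_).symm
  rintro _ ⟨i, rfl⟩
  exact (commute_liftC_embR_downChain hinv hR hD i).symm

end Copies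

end TensorPowers

/-- the skew-symmetrizer commutes with the reversed chain of
copies of `D`:  `A^(k) D_{k̄} D_{\overline{k−1}} ⋯ D_{1̄} = D_{k̄} D_{\overline{k−1}} ⋯ D_{1̄} A^(k)`. -/
theorem statement13 {N : ℕ} (R Rinv : RMat N) (q : ℂ) (k : ℕ)
    (hq0 : q ≠ 0) (hq1 : q ≠ 1) (hqm1 : q ≠ -1)
    (hinv : R * Rinv = 1) (hinv' : Rinv * R = 1)
    (hbr : IsBraiding R) (hH : HeckeCond R q)
    (hqk : ∀ j : ℕ, 2 ≤ j → j ≤ k → qNum q j ≠ 0)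
    {A : Type _} [Ring A] [Algebra ℂ A]
    (D : Matrix (Fin N) (Fin N) A) (hDD : DDRel Rinv D) :
    liftC A (Asym k R q k) * downChain k R Rinv D k
      = downChain k R Rinv D k * liftC A (Asym k R q k) :=
  (statement13_general hinv hbr hDD (asym_mem_adjoin R q k)).eq
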